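/- arXiv:1902.03901 — 2 statements merged into one kernel-verified Lean document; each statement's English description precedes it below -/
import Mathlib

section
/- Let m > 0. The matrix-valued function φ is locally integrable (entrywise) on ℝ³, and it is a fundamental solution of the free Dirac operator in the distributional sense: for every smooth compactly supported function χ : ℝ³ → ℂ, i Σ_{j=1}^3 α_j ( ∫_{ℝ³} (∂_j χ)(x) φ(x) dx ) + m β ( ∫_{ℝ³} χ(x) φ(x) dx ) = χ(0) I₄, where the integrals are entrywise Lebesgue integrals of ℂ^{4×4}-valued functions. -/
open Matrix

/-- The Pauli matrices `σ₁, σ₂, σ₃`. -/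
noncomputable def pauli : Fin 3 → Matrix (Fin 2) (Fin 2) ℂ
  | 0 => !![0, 1; 1, 0]
  | 1 => !![0, -Complex.I; Complex.I, 0]
  | 2 => !![1, 0; 0, -1]

/-- The Dirac matrices `α₁, α₂, α₃`, given in 2×2 blocks by `α_j = [[0, σ_j], [σ_j, 0]]`. -/
noncomputable def diracAlpha : Fin 3 → Matrix (Fin 4) (Fin 4) ℂ
  | 0 => !![0, 0, 0, 1;
            0, 0, 1, 0;
            0, 1, 0, 0;
            1, 0, 0, 0]
  | 1 => !![0, 0, 0, -Complex.I;
            0, 0, Complex.I, 0;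
            0, -Complex.I, 0, 0;
            Complex.I, 0, 0, 0]
  | 2 => !![0, 0, 1, 0;
            0, 0, 0, -1;
            1, 0, 0, 0;
            0, -1, 0, 0]

/-- The Dirac matrix `β = [[I₂, 0], [0, -I₂]]`. -/
noncomputable def diracBeta : Matrix (Fin 4) (Fin 4) ℂ :=
  !![1, 0, 0, 0;
     0, 1, 0, 0;
     0, 0, -1, 0;
     0, 0, 0, -1]

/-- For `p ∈ ℝ³`, the matrix `α·p = Σ_j p_j α_j`. -/
noncomputable def alphaDot (p : EuclideanSpace ℝ (Fin 3)) : Matrix (Fin 4) (Fin 4) ℂ :=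
  ∑ j : Fin 3, (p j : ℂ) • diracAlpha j


/-- The fundamental solution `φ` of the free Dirac operator `D = -i α·∇ + m β`:
`φ(x) = (e^{-m|x|}/(4π|x|)) (m β + (1 + m|x|) i (α·x)/|x|²)` for `x ≠ 0`. -/
noncomputable def phiFund (m : ℝ) (x : EuclideanSpace ℝ (Fin 3)) : Matrix (Fin 4) (Fin 4) ℂ :=
  ((Real.exp (-(m * ‖x‖)) / (4 * Real.pi * ‖x‖) : ℝ) : ℂ) •
    ((m : ℂ) • diracBeta +
      (((1 + m * ‖x‖) / ‖x‖ ^ 2 : ℝ) : ℂ) • (Complex.I • alphaDot x))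


open MeasureTheory


abbrev E3 := EuclideanSpace ℝ (Fin 3)

noncomputable def gS (m s : ℝ) : ℝ := Real.exp (-(m * s)) / (4 * Real.pi * s)

noncomputable def hS (m s : ℝ) : ℝ := -((1 + m * s) * Real.exp (-(m * s)) / (4 * Real.pi * s ^ 3))

noncomputable def rS (ε : ℝ) (x : E3) : ℝ := √(‖x‖ ^ 2 + ε)

lemma rS_zero (x : E3) : rS 0 x = ‖x‖ := by simp [rS]

lemma rS_pos {ε : ℝ} (hε : 0 < ε) (x : E3) : 0 < rS ε x := Real.sqrt_pos.2 (by positivity)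

lemma le_rS {ε : ℝ} (hε : 0 ≤ ε) (x : E3) : ‖x‖ ≤ rS ε x := Real.le_sqrt_of_sq_le (by linarith)

lemma contDiff_rS {ε : ℝ} (hε : 0 < ε) : ContDiff ℝ 1 (rS ε) := by
  unfold rS
  exact ((contDiff_norm_sq ℝ).add contDiff_const).sqrt (fun x => by positivity)

lemma fderiv_rS {ε : ℝ} (hε : 0 < ε) (x v : E3) :
    fderiv ℝ (rS ε) x v = inner ℝ x v / rS ε x := by
  have h1 : HasFDerivAt (fun x : E3 => ‖x‖ ^ 2 + ε) (2 • (innerSL ℝ x)) x :=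
    (hasStrictFDerivAt_norm_sq x).hasFDerivAt.add_const ε
  have h2 := h1.sqrt (by positivity)
  have h3 : HasFDerivAt (rS ε) _ x := h2
  rw [h3.fderiv]
  have := (rS_pos hε x).ne'
  simp only [rS] at this ⊢
  simp
  field_simp

lemma hasDerivAt_gS (m : ℝ) {s : ℝ} (hs : s ≠ 0) : HasDerivAt (gS m) (hS m s * s) s := by
  have h1 : HasDerivAt (fun s : ℝ => Real.exp (-(m * s))) (Real.exp (-(m * s)) * (-(m * 1))) s :=
    (((hasDerivAt_id s).const_mul m).neg).exp
  have h2 : HasDerivAt (fun s : ℝ => 4 * Real.pi * s) (4 * Real.pi * 1) s :=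
    (hasDerivAt_id s).const_mul _
  have hpi := Real.pi_pos.ne'
  refine HasDerivAt.congr_deriv (f := gS m) (h1.div h2 (by positivity)) ?_
  unfold hS
  field_simp
  ring

lemma contDiffAt_gS (m : ℝ) {s : ℝ} (hs : s ≠ 0) : ContDiffAt ℝ 1 (gS m) s := by
  have hpi := Real.pi_pos.ne'
  unfold gS
  exact ContDiffAt.div (by fun_prop) (by fun_prop) (by positivity)

lemma contDiffAt_hS (m : ℝ) {s : ℝ} (hs : s ≠ 0) : ContDiffAt ℝ 1 (hS m) s := by
  have hpi := Real.pi_pos.ne'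
  unfold hS
  exact (ContDiffAt.div (by fun_prop) (by fun_prop) (by positivity)).neg

lemma fderiv_comp_rS {f : ℝ → ℝ} (hf : ∀ s ≠ 0, ContDiffAt ℝ 1 f s) {ε : ℝ} (hε : 0 < ε)
    (x v : E3) : fderiv ℝ (fun x => f (rS ε x)) x v =
      deriv f (rS ε x) / rS ε x * inner ℝ x v := by
  have hp := (rS_pos hε x).ne'
  have h1 := ((hf _ hp).differentiableAt one_ne_zero).hasDerivAt
  have h2 := (((contDiff_rS hε).differentiable one_ne_zero) x).hasFDerivAt
  have h3 : HasFDerivAt (fun x => f (rS ε x)) _ x := h1.comp_hasFDerivAt x h2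
  rw [h3.fderiv]
  simp [fderiv_rS hε]
  ring

lemma contDiff_comp_rS {f : ℝ → ℝ} (hf : ∀ s ≠ 0, ContDiffAt ℝ 1 f s) {ε : ℝ} (hε : 0 < ε) :
    ContDiff ℝ 1 (fun x => f (rS ε x)) :=
  contDiff_iff_contDiffAt.2 fun x =>
    (hf _ (rS_pos hε x).ne').comp x (contDiff_rS hε).contDiffAt

/-- integration by parts against a real `C¹` function. -/
lemma ibp {χ : E3 → ℂ} (hχ : ContDiff ℝ 1 χ) (hc : HasCompactSupport χ) {F : E3 → ℝ}
    (hF : ContDiff ℝ 1 F) (v : E3) :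
    ∫ x, χ x * ((fderiv ℝ F x v : ℝ) : ℂ) = -∫ x, fderiv ℝ χ x v * ((F x : ℝ) : ℂ) := by
  have hFc : ContDiff ℝ 1 (fun x => ((F x : ℝ) : ℂ)) := Complex.ofRealCLM.contDiff.comp hF
  have key : ∀ x, fderiv ℝ (fun x => ((F x : ℝ) : ℂ)) x v = ((fderiv ℝ F x v : ℝ) : ℂ) := by
    intro x
    have h1 := ((hF.differentiable one_ne_zero) x).hasFDerivAt
    have h2 : HasFDerivAt (fun x => ((F x : ℝ) : ℂ)) _ x :=
      Complex.ofRealCLM.hasFDerivAt.comp x h1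
    rw [h2.fderiv]; simp
  have hcd : Continuous (fun x => fderiv ℝ χ x v) :=
    (hχ.continuous_fderiv one_ne_zero).clm_apply continuous_const
  have hcd' : Continuous (fun x => fderiv ℝ (fun x => ((F x : ℝ) : ℂ)) x v) :=
    (hFc.continuous_fderiv one_ne_zero).clm_apply continuous_const
  have hs : HasCompactSupport (fun x => fderiv ℝ χ x v) := hc.fderiv_apply ℝ v
  have := integral_mul_fderiv_eq_neg_fderiv_mul_of_integrable (μ := (volume : Measure E3))
    (f := χ) (g := fun x => ((F x : ℝ) : ℂ)) (v := v)
    ((hcd.mul hFc.continuous).integrable_of_hasCompactSupport hs.mul_right)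
    ((hχ.continuous.mul hcd').integrable_of_hasCompactSupport hc.mul_right)
    ((hχ.continuous.mul hFc.continuous).integrable_of_hasCompactSupport hc.mul_right)
    (fun x _ => hχ.differentiable one_ne_zero x)
    (fun x _ => hFc.differentiable one_ne_zero x)
  simpa only [key] using this

lemma locInt_bd : LocallyIntegrable (fun x : E3 => ‖x‖⁻¹ + (‖x‖ ^ 2)⁻¹) volume := by
  intro x
  refine ⟨Metric.ball 0 (‖x‖ + 1), Metric.isOpen_ball.mem_nhds (by simp), ?_⟩
  rw [integrableOn_fun_norm_addHaar volume (f := fun y : ℝ => y⁻¹ + (y ^ 2)⁻¹)]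
  have h : IntegrableOn (fun y : ℝ => y + 1) (Set.Ioo 0 (‖x‖ + 1)) volume :=
    ((by fun_prop : Continuous fun y : ℝ => y + 1).continuousOn.integrableOn_Icc).mono_set
      Set.Ioo_subset_Icc_self
  refine h.congr_fun (fun y hy => ?_) measurableSet_Ioo
  have : y ≠ 0 := hy.1.ne'
  simp
  field_simp

lemma one_add_mul_exp_le (t : ℝ) : (1 + t) * Real.exp (-t) ≤ 1 := by
  have := Real.add_one_le_exp t
  rw [Real.exp_neg, ← div_eq_mul_inv, div_le_one (Real.exp_pos _)]
  linarith

lemma abs_gS_le {m : ℝ} (hm : 0 < m) {r s : ℝ} (hr : 0 < r) (hrs : r ≤ s) :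
    |gS m s| ≤ r⁻¹ + (r ^ 2)⁻¹ := by
  have hs : 0 < s := hr.trans_le hrs
  have hpi := Real.pi_gt_three
  have h1 : Real.exp (-(m * s)) ≤ 1 := Real.exp_le_one_iff.2 (by nlinarith [mul_pos hm hs])
  unfold gS
  rw [abs_of_nonneg (by positivity)]
  calc Real.exp (-(m * s)) / (4 * Real.pi * s) ≤ 1 / (1 * r) := by
        gcongr; linarith
    _ = r⁻¹ := by simp
    _ ≤ _ := by simp; positivity

lemma abs_hS_le {m : ℝ} (hm : 0 < m) {r s t : ℝ} (hr : 0 < r) (hrs : r ≤ s) (ht : |t| ≤ r) :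
    |t * hS m s| ≤ r⁻¹ + (r ^ 2)⁻¹ := by
  have hs : 0 < s := hr.trans_le hrs
  have hpi := Real.pi_gt_three
  have h1 := one_add_mul_exp_le (m * s)
  unfold hS
  rw [abs_mul, abs_neg, abs_of_nonneg (a := _ / _) (by positivity)]
  calc |t| * ((1 + m * s) * Real.exp (-(m * s)) / (4 * Real.pi * s ^ 3)) ≤ r * (1 / (1 * r ^ 3)) := by
        gcongr; linarith
    _ = (r ^ 2)⁻¹ := by field_simp
    _ ≤ _ := by simp; positivity

lemma meas_gS (m : ℝ) : Measurable (gS m) := by unfold gS; fun_prop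
lemma meas_hS (m : ℝ) : Measurable (hS m) := by unfold hS; fun_prop
lemma meas_rS (ε : ℝ) : Measurable (rS ε) := by unfold rS; fun_prop

lemma ae_ne : ∀ᵐ x : E3 ∂volume, x ≠ 0 := by
  simp [ae_iff]

lemma locInt_of_bd {F : E3 → ℝ} (hF : Measurable F)
    (hb : ∀ x : E3, x ≠ 0 → |F x| ≤ ‖x‖⁻¹ + (‖x‖ ^ 2)⁻¹) :
    LocallyIntegrable (fun x => ((F x : ℝ) : ℂ)) volume := by
  refine locInt_bd.mono (by fun_prop) ?_
  filter_upwards [ae_ne] with x hx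
  rw [Complex.norm_real, Real.norm_eq_abs, Real.norm_eq_abs]
  exact (hb x hx).trans (le_abs_self _)

lemma dct {ψ : E3 → ℂ} (hψ : Continuous ψ) (hc : HasCompactSupport ψ) {F : ℝ → E3 → ℝ}
    (hF : ∀ ε, Measurable (F ε))
    (hb : ∀ ε, 0 ≤ ε → ∀ x : E3, x ≠ 0 → |F ε x| ≤ ‖x‖⁻¹ + (‖x‖ ^ 2)⁻¹)
    (hl : ∀ x : E3, x ≠ 0 → ContinuousAt (fun ε => F ε x) 0) :
    Filter.Tendsto (fun ε => ∫ x, ψ x * ((F ε x : ℝ) : ℂ)) (nhdsWithin 0 (Set.Ioi 0))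
      (nhds (∫ x, ψ x * ((F 0 x : ℝ) : ℂ))) := by
  refine tendsto_integral_filter_of_dominated_convergence
    (fun x => ‖ψ x‖ * (‖x‖⁻¹ + (‖x‖ ^ 2)⁻¹)) ?_ ?_ ?_ ?_
  · filter_upwards with ε
    have := hF ε
    have := hψ.measurable
    exact (by fun_prop : Measurable _).aestronglyMeasurable
  · filter_upwards [self_mem_nhdsWithin] with ε hε
    filter_upwards [ae_ne] with x hx
    rw [norm_mul, Complex.norm_real, Real.norm_eq_abs]
    gcongr
    exact hb ε (le_of_lt hε) x hx
  · exact locInt_bd.integrable_smul_left_of_hasCompactSupport (g := fun x => ‖ψ x‖)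
      hψ.norm hc.norm
  · filter_upwards [ae_ne] with x hx
    have h1 : Filter.Tendsto (fun ε => F ε x) (nhdsWithin 0 (Set.Ioi 0)) (nhds (F 0 x)) :=
      (hl x hx).tendsto.mono_left nhdsWithin_le_nhds
    exact ((Complex.continuous_ofReal.tendsto _).comp h1).const_mul _

lemma continuousAt_rS (x : E3) : ContinuousAt (fun ε => rS ε x) 0 := by
  unfold rS; fun_prop

lemma continuousAt_comp_rS {f : ℝ → ℝ} (hf : ∀ s ≠ 0, ContDiffAt ℝ 1 f s) {x : E3} (hx : x ≠ 0) :
    ContinuousAt (fun ε => f (rS ε x)) 0 := by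
  have h : ContinuousAt f (rS 0 x) := by
    rw [rS_zero]; exact (hf _ (norm_ne_zero_iff.2 hx)).continuousAt
  exact ContinuousAt.comp (f := fun ε => rS ε x) h (continuousAt_rS x)

lemma abs_coord_le (x : E3) (j : Fin 3) : |x j| ≤ ‖x‖ := by
  simpa using PiLp.norm_apply_le x j

lemma bd_g {m : ℝ} (hm : 0 < m) (ε : ℝ) (hε : 0 ≤ ε) (x : E3) (hx : x ≠ 0) :
    |gS m (rS ε x)| ≤ ‖x‖⁻¹ + (‖x‖ ^ 2)⁻¹ :=
  abs_gS_le hm (norm_pos_iff.2 hx) (le_rS hε x)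

lemma bd_h {m : ℝ} (hm : 0 < m) (j : Fin 3) (ε : ℝ) (hε : 0 ≤ ε) (x : E3) (hx : x ≠ 0) :
    |x j * hS m (rS ε x)| ≤ ‖x‖⁻¹ + (‖x‖ ^ 2)⁻¹ :=
  abs_hS_le hm (norm_pos_iff.2 hx) (le_rS hε x) (abs_coord_le x j)

lemma meas_h (m : ℝ) (j : Fin 3) (ε : ℝ) : Measurable (fun x : E3 => x j * hS m (rS ε x)) := by
  have := (meas_hS m).comp (meas_rS ε)
  exact Measurable.mul (by fun_prop) this

lemma meas_g (m : ℝ) (ε : ℝ) : Measurable (fun x : E3 => gS m (rS ε x)) :=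
  (meas_gS m).comp (meas_rS ε)

lemma tend_g {m : ℝ} (hm : 0 < m) {ψ : E3 → ℂ} (hψ : Continuous ψ) (hc : HasCompactSupport ψ) :
    Filter.Tendsto (fun ε => ∫ x, ψ x * ((gS m (rS ε x) : ℝ) : ℂ)) (nhdsWithin 0 (Set.Ioi 0))
      (nhds (∫ x, ψ x * ((gS m ‖x‖ : ℝ) : ℂ))) := by
  have := dct hψ hc (meas_g m) (bd_g hm)
    (fun x hx => continuousAt_comp_rS (fun s hs => contDiffAt_gS m hs) hx)
  simpa only [rS_zero] using this

lemma tend_h {m : ℝ} (hm : 0 < m) (j : Fin 3) {ψ : E3 → ℂ} (hψ : Continuous ψ)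
    (hc : HasCompactSupport ψ) :
    Filter.Tendsto (fun ε => ∫ x, ψ x * ((x j * hS m (rS ε x) : ℝ) : ℂ))
      (nhdsWithin 0 (Set.Ioi 0)) (nhds (∫ x, ψ x * ((x j * hS m ‖x‖ : ℝ) : ℂ))) := by
  have := dct hψ hc (meas_h m j) (bd_h hm j)
    (fun x hx => continuousAt_const.mul
      (continuousAt_comp_rS (fun s hs => contDiffAt_hS m hs) hx))
  simpa only [rS_zero] using this

lemma partA {m : ℝ} (hm : 0 < m) {χ : E3 → ℂ} (hχ : ContDiff ℝ 1 χ) (hc : HasCompactSupport χ)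
    (j : Fin 3) :
    ∫ x, fderiv ℝ χ x (EuclideanSpace.single j 1) * ((gS m ‖x‖ : ℝ) : ℂ) =
      -∫ x, χ x * ((x j * hS m ‖x‖ : ℝ) : ℂ) := by
  have hcd : Continuous (fun x => fderiv ℝ χ x (EuclideanSpace.single j 1)) :=
    (hχ.continuous_fderiv one_ne_zero).clm_apply continuous_const
  have hs : HasCompactSupport (fun x => fderiv ℝ χ x (EuclideanSpace.single j 1)) :=
    hc.fderiv_apply ℝ _
  refine tendsto_nhds_unique (tend_g hm hcd hs) ?_
  refine ((tend_h hm j hχ.continuous hc).neg).congr' ?_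
  filter_upwards [self_mem_nhdsWithin] with ε hε
  have hg : ∀ s ≠ 0, ContDiffAt ℝ 1 (gS m) s := fun s hs => contDiffAt_gS m hs
  have h := ibp hχ hc (contDiff_comp_rS hg hε) (EuclideanSpace.single j 1)
  rw [eq_comm, ← neg_eq_iff_eq_neg, ← h]
  congr 1; ext x
  rw [fderiv_comp_rS hg hε, (hasDerivAt_gS m (rS_pos hε x).ne').deriv,
    mul_div_cancel_right₀ _ (rS_pos hε x).ne']
  simp [EuclideanSpace.inner_single_right, mul_comm]

lemma partB {m : ℝ} (hm : 0 < m) {χ : E3 → ℂ} (hχ : ContDiff ℝ 1 χ) (hc : HasCompactSupport χ)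
    (j k : Fin 3) :
    ∫ x, fderiv ℝ χ x (EuclideanSpace.single j 1) * ((x k * hS m ‖x‖ : ℝ) : ℂ) =
      ∫ x, fderiv ℝ χ x (EuclideanSpace.single k 1) * ((x j * hS m ‖x‖ : ℝ) : ℂ) := by
  have hcd (j : Fin 3) : Continuous (fun x => fderiv ℝ χ x (EuclideanSpace.single j 1)) :=
    (hχ.continuous_fderiv one_ne_zero).clm_apply continuous_const
  have hs (j : Fin 3) : HasCompactSupport (fun x => fderiv ℝ χ x (EuclideanSpace.single j 1)) :=
    hc.fderiv_apply ℝ _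
  rcases eq_or_ne j k with rfl | hjk
  · rfl
  refine tendsto_nhds_unique (tend_h hm k (hcd j) (hs j)) ?_
  refine (tend_h hm j (hcd k) (hs k)).congr' ?_
  filter_upwards [self_mem_nhdsWithin] with ε hε
  have hg : ∀ s ≠ 0, ContDiffAt ℝ 1 (hS m) s := fun s hs => contDiffAt_hS m hs
  have hC := contDiff_comp_rS hg hε
  have hco (k : Fin 3) : ContDiff ℝ 1 (fun x : E3 => x k) := by fun_prop
  have hcf (k : Fin 3) (x v : E3) : fderiv ℝ (fun x : E3 => x k) x v = v k := by
    have : HasFDerivAt (fun x : E3 => x k) (EuclideanSpace.proj k : E3 →L[ℝ] ℝ) x :=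
      (EuclideanSpace.proj k : E3 →L[ℝ] ℝ).hasFDerivAt
    rw [this.fderiv]; simp
  have h (j k : Fin 3) := ibp hχ hc ((hco k).mul hC) (EuclideanSpace.single j 1)
  have hd (j k : Fin 3) (hjk : j ≠ k) (x : E3) :
      fderiv ℝ (fun x : E3 => x k * hS m (rS ε x)) x (EuclideanSpace.single j 1)
       = x k * (deriv (hS m) (rS ε x) / rS ε x * x j) := by
    have := ((hco k).differentiable one_ne_zero x).hasFDerivAt.mul
      (hC.differentiable one_ne_zero x).hasFDerivAt
    have h' : HasFDerivAt (fun x : E3 => x k * hS m (rS ε x)) _ x := this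
    rw [h'.fderiv]
    simp [fderiv_comp_rS hg hε, hcf, EuclideanSpace.inner_single_right, hjk.symm]
  have h1 := h j k
  have h2 := h k j
  rw [← neg_inj]
  refine (h2.symm.trans ?_).trans h1
  congr 1; ext x
  rw [hd j k hjk, hd k j hjk.symm]
  push_cast; ring

lemma polar {F : E3 → ℂ} (hF : Integrable F volume) :
    ∫ x, F x = ∫ ω : Metric.sphere (0 : E3) 1,
      (∫ r in Set.Ioi (0 : ℝ), ((r ^ 2 : ℝ) : ℂ) * F (r • (ω : E3)))
        ∂(volume : Measure E3).toSphere := by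
  have hmp := (volume : Measure E3).measurePreserving_homeomorphUnitSphereProd
  have hemb := (homeomorphUnitSphereProd E3).measurableEmbedding
  set f : Metric.sphere (0 : E3) 1 × Set.Ioi (0 : ℝ) → ℂ := fun p => F ((p.2 : ℝ) • (p.1 : E3))
    with hf
  have hfe : ∀ x : ({(0)}ᶜ : Set E3), f (homeomorphUnitSphereProd E3 x) = F x := by
    intro x
    have hx : ‖(x : E3)‖ ≠ 0 := norm_ne_zero_iff.2 x.2
    simp [hf, smul_smul, hx]
  have hint : Integrable f ((volume : Measure E3).toSphere.prod
      (.volumeIoiPow (Module.finrank ℝ E3 - 1))) := by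
    rw [← hmp.integrable_comp_emb hemb]
    have h1 : IntegrableOn F ({0}ᶜ : Set E3) volume := hF.integrableOn
    rw [integrableOn_iff_comap_subtypeVal (by measurability)] at h1
    refine h1.congr (Filter.Eventually.of_forall fun x => ?_)
    simp [hfe]
  calc ∫ x, F x = ∫ x : ({(0)}ᶜ : Set E3), F x ∂((volume : Measure E3).comap (↑)) := by
        rw [integral_subtype_comap (measurableSet_singleton _).compl fun x ↦ F x,
          restrict_compl_singleton]
    _ = ∫ p, f p ∂((volume : Measure E3).toSphere.prod
          (.volumeIoiPow (Module.finrank ℝ E3 - 1))) := by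
        rw [← hmp.integral_comp hemb]
        simp only [hfe]
    _ = _ := by
        rw [integral_prod _ hint]
        congr 1; ext ω
        simp only [Measure.volumeIoiPow, ENNReal.ofReal, hf]
        rw [integral_withDensity_eq_integral_smul,
          integral_subtype_comap measurableSet_Ioi
            fun a : ℝ ↦ Real.toNNReal (a ^ (Module.finrank ℝ E3 - 1)) • F (a • (ω : E3)),
          setIntegral_congr_fun measurableSet_Ioi fun x hx ↦ ?_]
        · have h2 : Module.finrank ℝ E3 - 1 = 2 := by simp
          rw [h2]
          rw [NNReal.smul_def, Real.coe_toNNReal _ (pow_nonneg (le_of_lt hx) _),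
            Complex.real_smul]
        · exact (measurable_subtype_coe.pow_const _).real_toNNReal

lemma radial {χ : E3 → ℂ} (hχ : ContDiff ℝ 1 χ) (hc : HasCompactSupport χ) (m : ℝ)
    (ω : Metric.sphere (0 : E3) 1) :
    ∫ r in Set.Ioi (0 : ℝ), ((r ^ 2 : ℝ) : ℂ) *
      ((m : ℂ) ^ 2 * (χ (r • (ω : E3)) * ((gS m ‖r • (ω : E3)‖ : ℝ) : ℂ)) +
        fderiv ℝ χ (r • (ω : E3)) (r • (ω : E3)) * ((hS m ‖r • (ω : E3)‖ : ℝ) : ℂ)) =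
      χ 0 / (4 * Real.pi) := by
  have hω : ‖(ω : E3)‖ = 1 := by simp
  have hpi : Real.pi ≠ 0 := Real.pi_pos.ne'
  set u : ℝ → ℝ := fun r => -((1 + m * r) * Real.exp (-(m * r)) / (4 * Real.pi)) with hu
  set f : ℝ → ℂ := fun r => ((u r : ℝ) : ℂ) * χ (r • (ω : E3)) with hf
  have hu1 : ContDiff ℝ 1 u := by
    rw [hu]; fun_prop
  have hl : ContDiff ℝ 1 (fun r : ℝ => χ (r • (ω : E3))) := hχ.comp (by fun_prop)
  have hf1 : ContDiff ℝ 1 f := (Complex.ofRealCLM.contDiff.comp hu1).mul hl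
  have hcs : HasCompactSupport f := by
    have : HasCompactSupport (fun r : ℝ => χ (r • (ω : E3))) := by
      refine hc.comp_isClosedEmbedding (g := fun r : ℝ => r • (ω : E3)) ?_
      exact isClosedEmbedding_smul_left (fun h => by simp [h] at hω)
    exact this.mul_left
  have h := hcs.integral_Ioi_deriv_eq hf1 0
  have hu' (r : ℝ) : HasDerivAt u (m ^ 2 * r * Real.exp (-(m * r)) / (4 * Real.pi)) r := by
    have h1 : HasDerivAt (fun s : ℝ => Real.exp (-(m * s))) (Real.exp (-(m * r)) * (-(m * 1))) r :=
      (((hasDerivAt_id r).const_mul m).neg).exp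
    have h2 : HasDerivAt (fun s : ℝ => 1 + m * s) (m * 1) r :=
      ((hasDerivAt_id r).const_mul m).const_add 1
    refine HasDerivAt.congr_deriv (f := u) ((h2.mul h1).div_const _).neg ?_
    field_simp
    ring
  have hl' (r : ℝ) : HasDerivAt (fun r : ℝ => χ (r • (ω : E3)))
      (fderiv ℝ χ (r • (ω : E3)) (ω : E3)) r := by
    have h1 := ((hχ.differentiable one_ne_zero) (r • (ω : E3))).hasFDerivAt
    have h2 : HasDerivAt (fun r : ℝ => r • (ω : E3)) ((1 : ℝ) • (ω : E3)) r :=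
      (hasDerivAt_id r).smul_const _
    have h3 := h1.comp_hasDerivAt r h2
    rw [one_smul] at h3
    exact h3
  have hf' (r : ℝ) := ((hu' r).ofReal_comp.mul (hl' r)).deriv
  have h0 : -f 0 = χ 0 / (4 * Real.pi) := by
    simp [hf, hu]; field_simp
  rw [← h0, ← h]
  refine setIntegral_congr_fun measurableSet_Ioi fun r hr => ?_
  have hr' : (0 : ℝ) < r := hr
  have hrc : (r : ℂ) ≠ 0 := by exact_mod_cast hr'.ne'
  have hpc : (Real.pi : ℂ) ≠ 0 := by exact_mod_cast hpi
  refine Eq.trans ?_ (hf' r).symm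
  have hn : ‖r • (ω : E3)‖ = r := by rw [norm_smul, hω, Real.norm_of_nonneg hr'.le, mul_one]
  simp only [hn, gS, hS, hu, map_smul, Complex.real_smul]
  push_cast
  field_simp

lemma loc_g {m : ℝ} (hm : 0 < m) :
    LocallyIntegrable (fun x : E3 => ((gS m ‖x‖ : ℝ) : ℂ)) volume := by
  have := locInt_of_bd (meas_g m 0) (bd_g hm 0 le_rfl)
  simpa only [rS_zero] using this

lemma loc_h {m : ℝ} (hm : 0 < m) (j : Fin 3) :
    LocallyIntegrable (fun x : E3 => ((x j * hS m ‖x‖ : ℝ) : ℂ)) volume := by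
  have := locInt_of_bd (meas_h m j 0) (bd_h hm j 0 le_rfl)
  simpa only [rS_zero] using this

lemma int_g {m : ℝ} (hm : 0 < m) {ψ : E3 → ℂ} (hψ : Continuous ψ) (hc : HasCompactSupport ψ) :
    Integrable (fun x : E3 => ψ x * ((gS m ‖x‖ : ℝ) : ℂ)) volume :=
  (loc_g hm).integrable_smul_left_of_hasCompactSupport hψ hc

lemma int_h {m : ℝ} (hm : 0 < m) (j : Fin 3) {ψ : E3 → ℂ} (hψ : Continuous ψ)
    (hc : HasCompactSupport ψ) :
    Integrable (fun x : E3 => ψ x * ((x j * hS m ‖x‖ : ℝ) : ℂ)) volume :=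
  (loc_h hm j).integrable_smul_left_of_hasCompactSupport hψ hc

lemma partC {m : ℝ} (hm : 0 < m) {χ : E3 → ℂ} (hχ : ContDiff ℝ 1 χ) (hc : HasCompactSupport χ) :
    (m : ℂ) ^ 2 * (∫ x, χ x * ((gS m ‖x‖ : ℝ) : ℂ)) +
      ∑ j : Fin 3,
        ∫ x, fderiv ℝ χ x (EuclideanSpace.single j 1) * ((x j * hS m ‖x‖ : ℝ) : ℂ) = χ 0 := by
  have hcd (j : Fin 3) : Continuous (fun x => fderiv ℝ χ x (EuclideanSpace.single j 1)) :=
    (hχ.continuous_fderiv one_ne_zero).clm_apply continuous_const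
  have hs (j : Fin 3) : HasCompactSupport (fun x => fderiv ℝ χ x (EuclideanSpace.single j 1)) :=
    hc.fderiv_apply ℝ _
  have hi1 := (int_g hm hχ.continuous hc).const_mul ((m : ℂ) ^ 2)
  have hi2 (j : Fin 3) := int_h hm j (hcd j) (hs j)
  have hi3 := integrable_finsetSum Finset.univ fun j _ => hi2 j
  rw [← integral_const_mul, ← integral_finsetSum _ (fun j _ => hi2 j), ← integral_add hi1 hi3]
  have he (x : E3) : (m : ℂ) ^ 2 * (χ x * ((gS m ‖x‖ : ℝ) : ℂ)) +
      ∑ j : Fin 3, fderiv ℝ χ x (EuclideanSpace.single j 1) * ((x j * hS m ‖x‖ : ℝ) : ℂ) =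
      (m : ℂ) ^ 2 * (χ x * ((gS m ‖x‖ : ℝ) : ℂ)) + fderiv ℝ χ x x * ((hS m ‖x‖ : ℝ) : ℂ) := by
    have hx : x = ∑ j : Fin 3, x j • (EuclideanSpace.single j (1 : ℝ) : E3) := by
      ext i; fin_cases i <;> simp [Fin.sum_univ_three]
    have h2 : fderiv ℝ χ x x = ∑ j : Fin 3, x j • fderiv ℝ χ x (EuclideanSpace.single j 1) := by
      have h3 := congrArg (fderiv ℝ χ x) hx
      rw [map_sum] at h3
      simpa only [map_smul] using h3
    rw [h2, Finset.sum_mul]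
    congr 1
    refine Finset.sum_congr rfl fun j _ => ?_
    rw [Complex.real_smul]; push_cast; ring
  have hi4 := (hi1.add hi3).congr (Filter.Eventually.of_forall he)
  rw [integral_congr_ae (Filter.Eventually.of_forall he), polar hi4]
  simp only [radial hχ hc m]
  rw [integral_const, Measure.toSphere_real_apply_univ, Measure.real,
    EuclideanSpace.volume_ball_fin_three]
  have hpc : (Real.pi : ℂ) ≠ 0 := by exact_mod_cast Real.pi_pos.ne'
  have hp : 0 ≤ Real.pi * 4 / 3 := by positivity
  simp [ENNReal.toReal_ofReal hp]
  field_simp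

lemma phi_entry (m : ℝ) (x : E3) (a b : Fin 4) :
    phiFund m x a b = (m * diracBeta a b) * ((gS m ‖x‖ : ℝ) : ℂ) +
      ∑ k : Fin 3, (-Complex.I * diracAlpha k a b) * ((x k * hS m ‖x‖ : ℝ) : ℂ) := by
  simp only [phiFund, alphaDot, gS, hS, Matrix.smul_apply, Matrix.add_apply, Fin.sum_univ_three,
    smul_eq_mul]
  push_cast
  rcases eq_or_ne (‖x‖) 0 with h | h
  · simp [h]
  have hpc : (Real.pi : ℂ) ≠ 0 := by exact_mod_cast Real.pi_pos.ne'
  have hc : (‖x‖ : ℂ) ≠ 0 := by exact_mod_cast h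
  field_simp

lemma phi_int {m : ℝ} (hm : 0 < m) {ψ : E3 → ℂ} (hψ : Continuous ψ) (hc : HasCompactSupport ψ)
    (a b : Fin 4) :
    ∫ x, ψ x * phiFund m x a b = (m * diracBeta a b) * (∫ x, ψ x * ((gS m ‖x‖ : ℝ) : ℂ)) +
      ∑ k : Fin 3, (-Complex.I * diracAlpha k a b) *
        ∫ x, ψ x * ((x k * hS m ‖x‖ : ℝ) : ℂ) := by
  have hi1 := (int_g hm hψ hc).const_mul (m * diracBeta a b)
  have hi2 (k : Fin 3) := (int_h hm k hψ hc).const_mul (-Complex.I * diracAlpha k a b)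
  simp only [← integral_const_mul]
  rw [← integral_finsetSum _ (fun j _ => hi2 j),
    ← integral_add hi1 (integrable_finsetSum Finset.univ fun j _ => hi2 j)]
  congr 1; ext x
  rw [phi_entry, mul_add, Finset.mul_sum]
  congr 1
  · ring
  · refine Finset.sum_congr rfl fun j _ => ?_
    ring

lemma dirac_alg (m g0 : ℂ) (h : Fin 3 → ℂ) (H : Fin 3 → Fin 3 → ℂ) (hB : ∀ j k, H j k = H k j) :
    Complex.I • (∑ j : Fin 3, diracAlpha j *
        (Matrix.of fun a b => m * diracBeta a b * (-h j) +
          ∑ k : Fin 3, -Complex.I * diracAlpha k a b * H j k)) +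
      m • (diracBeta * (Matrix.of fun a b => m * diracBeta a b * g0 +
          ∑ k : Fin 3, -Complex.I * diracAlpha k a b * h k)) =
    (m ^ 2 * g0 + ∑ j : Fin 3, H j j) • (1 : Matrix (Fin 4) (Fin 4) ℂ) := by
  have b1 := hB 1 0
  have b2 := hB 2 0
  have b3 := hB 2 1
  have hI := Complex.I_sq
  have hI3 := Complex.I_pow_three
  simp only [Fin.sum_univ_three, b1, b2, b3]
  ext a b
  simp only [Matrix.add_apply, Matrix.smul_apply, Matrix.mul_apply, Fin.sum_univ_four,
    Matrix.of_apply, smul_eq_mul]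
  fin_cases a <;> fin_cases b <;>
    simp [diracAlpha, diracBeta] <;> ring_nf <;> simp only [hI, hI3] <;> ring

/-- For `m > 0`, the fundamental solution `φ` is locally integrable (entrywise) on `ℝ³`, and it
is a fundamental solution of the free Dirac operator in the distributional sense:
for every smooth compactly supported `χ : ℝ³ → ℂ`,
`i Σ_j α_j (∫ (∂_j χ) φ dx) + m β (∫ χ φ dx) = χ(0) I₄`. -/
theorem phiFund_locallyIntegrable_and_fundamental (m : ℝ) (hm : 0 < m) :
    (∀ a b : Fin 4,
      LocallyIntegrable (fun x : EuclideanSpace ℝ (Fin 3) => phiFund m x a b) volume) ∧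
    (∀ χ : EuclideanSpace ℝ (Fin 3) → ℂ, ContDiff ℝ (⊤ : ℕ∞) χ → HasCompactSupport χ →
      Complex.I • (∑ j : Fin 3, diracAlpha j *
          (Matrix.of fun a b =>
            ∫ x, fderiv ℝ χ x (EuclideanSpace.single j 1) * phiFund m x a b)) +
        (m : ℂ) • (diracBeta * (Matrix.of fun a b => ∫ x, χ x * phiFund m x a b)) =
      χ 0 • (1 : Matrix (Fin 4) (Fin 4) ℂ)) := by
  refine ⟨fun a b => ?_, fun χ hχ' hc => ?_⟩
  · have h1 := (loc_g hm).smul ((m : ℂ) * diracBeta a b)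
    have h2 (k : Fin 3) := (loc_h hm k).smul (-Complex.I * diracAlpha k a b)
    have h3 := h1.add (((h2 0).add (h2 1)).add (h2 2))
    refine h3.congr (Filter.Eventually.of_forall fun x => ?_)
    refine Eq.trans ?_ (phi_entry m x a b).symm
    simp [Fin.sum_univ_three]
    ring
  · have hχ : ContDiff ℝ 1 χ := hχ'.of_le (by exact_mod_cast le_top)
    have hcd (j : Fin 3) : Continuous (fun x => fderiv ℝ χ x (EuclideanSpace.single j 1)) :=
      (hχ.continuous_fderiv one_ne_zero).clm_apply continuous_const
    have hs (j : Fin 3) : HasCompactSupport (fun x => fderiv ℝ χ x (EuclideanSpace.single j 1)) :=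
      hc.fderiv_apply ℝ _
    have hA := partA hm hχ hc
    have hB := partB hm hχ hc
    have hC := partC hm hχ hc
    simp only [phi_int hm hχ.continuous hc, phi_int hm (hcd _) (hs _), hA]
    rw [← hC]
    generalize (∫ x, χ x * ((gS m ‖x‖ : ℝ) : ℂ)) = g0
    obtain ⟨h, hh⟩ : ∃ h : Fin 3 → ℂ, ∀ k, ∫ x, χ x * ((x k * hS m ‖x‖ : ℝ) : ℂ) = h k :=
      ⟨_, fun k => rfl⟩
    obtain ⟨H, hH⟩ : ∃ H : Fin 3 → Fin 3 → ℂ, ∀ j k,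
        ∫ x, fderiv ℝ χ x (EuclideanSpace.single j 1) * ((x k * hS m ‖x‖ : ℝ) : ℂ) = H j k :=
      ⟨_, fun j k => rfl⟩
    simp only [hH] at hB
    simp only [hh, hH]
    exact dirac_alg m g0 h H hB
end

section
/- Let m > 0, let μ be a finite Borel measure on ℝ³ whose topological support Σ is compact, and let g : ℝ³ → ℂ⁴ be μ-integrable. Then for every x in the open set ℝ³∖Σ the integral Φg(x) := ∫ φ(x−y) g(y) dμ(y) converges absolutely, the function Φg is smooth on ℝ³∖Σ, and it satisfies −i Σ_{j=1}^3 α_j ∂_j (Φg)(x) + m β (Φg)(x) = 0 for every x ∈ ℝ³∖Σ. -/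
open Matrix

open MeasureTheory

/-- The single-layer potential `Φg(x) = ∫ φ(x - y) g(y) dμ(y)`. -/
noncomputable def singleLayer (m : ℝ) (μ : Measure (EuclideanSpace ℝ (Fin 3)))
    (g : EuclideanSpace ℝ (Fin 3) → Fin 4 → ℂ) (x : EuclideanSpace ℝ (Fin 3)) : Fin 4 → ℂ :=
  ∫ y, (phiFund m (x - y)).mulVec (g y) ∂μ


section GenericKernel

lemma sub_mem_compl_zero {S : Set E3} {x y : E3} (hx : x ∉ S) (hy : y ∈ S) :
    x - y ∈ ({0}ᶜ : Set E3) := by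
  intro h
  have : x = y := sub_eq_zero.1 h
  exact hx (this ▸ hy)

lemma ae_mem_of_full {μ : Measure E3} {S : Set E3} (hS : μ Sᶜ = 0) : ∀ᵐ y ∂μ, y ∈ S := by
  rw [ae_iff]; exact hS

lemma kernel_aesm {H : Type} [NormedAddCommGroup H] [NormedSpace ℝ H]
    {μ : Measure E3} {S : Set E3}
    (hSc : IsClosed S) (hS : μ Sᶜ = 0) (k : E3 → H) (hk : ContinuousOn k {0}ᶜ)
    (x : E3) (hx : x ∉ S) : AEStronglyMeasurable (fun y => k (x - y)) μ := by
  have h1 : ContinuousOn (fun y => k (x - y)) S :=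
    hk.comp (by fun_prop) (fun y hy => sub_mem_compl_zero hx hy)
  have h2 := h1.aestronglyMeasurable (μ := μ) hSc.measurableSet
  rwa [Measure.restrict_eq_self_of_ae_mem (ae_mem_of_full hS)] at h2

lemma kernel_bound {H : Type} [NormedAddCommGroup H] [NormedSpace ℝ H]
    {S : Set E3} (hScl : IsClosed S) (hSc : IsCompact S) (k : E3 → H)
    (hk : ContinuousOn k {0}ᶜ) (x : E3) (hx : x ∉ S) :
    ∃ s ∈ nhds x, s ⊆ Sᶜ ∧ ∃ C, ∀ z ∈ s, ∀ y ∈ S, ‖k (z - y)‖ ≤ C := by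
  obtain ⟨r, hr, hrs⟩ := Metric.nhds_basis_closedBall.mem_iff.1 (hScl.isOpen_compl.mem_nhds hx)
  refine ⟨_, Metric.closedBall_mem_nhds x hr, hrs, ?_⟩
  have hcomp : IsCompact (Metric.closedBall x r ×ˢ S) := (isCompact_closedBall x r).prod hSc
  have hcont : ContinuousOn (fun p : E3 × E3 => k (p.1 - p.2)) (Metric.closedBall x r ×ˢ S) :=
    hk.comp (by fun_prop) (fun p hp => sub_mem_compl_zero (hrs hp.1) hp.2)
  obtain ⟨C, hC⟩ := hcomp.exists_bound_of_continuousOn hcont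
  exact ⟨C, fun z hz y hy => hC (z, y) ⟨hz, hy⟩⟩

variable {F G : Type} [NormedAddCommGroup F] [NormedSpace ℝ F]
  [NormedAddCommGroup G] [NormedSpace ℝ G]

lemma kernel_apply_aesm {μ : Measure E3} {S : Set E3}
    (hScl : IsClosed S) (hS : μ Sᶜ = 0) (k : E3 → F →L[ℝ] G) (hk : ContinuousOn k {0}ᶜ)
    (g : E3 → F) (hg : Integrable g μ)
    (x : E3) (hx : x ∉ S) : AEStronglyMeasurable (fun y => k (x - y) (g y)) μ :=
  (ContinuousLinearMap.apply ℝ G : F →L[ℝ] _).flip.aestronglyMeasurable_comp₂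
    (kernel_aesm hScl hS k hk x hx) hg.1

lemma kernel_integrable {μ : Measure E3} {S : Set E3}
    (hScl : IsClosed S) (hSc : IsCompact S) (hS : μ Sᶜ = 0) (k : E3 → F →L[ℝ] G)
    (hk : ContinuousOn k {0}ᶜ)
    (g : E3 → F) (hg : Integrable g μ)
    (x : E3) (hx : x ∉ S) : Integrable (fun y => k (x - y) (g y)) μ := by
  obtain ⟨s, hs, -, C, hC⟩ := kernel_bound hScl hSc k hk x hx
  refine (hg.norm.const_mul C).mono' (kernel_apply_aesm hScl hS k hk g hg x hx) ?_
  filter_upwards [ae_mem_of_full hS] with y hy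
  exact (k (x - y)).le_of_opNorm_le (hC x (mem_of_mem_nhds hs) y hy) _

/-- the derivative kernel -/
noncomputable def dker (k : E3 → F →L[ℝ] G) (z : E3) : F →L[ℝ] (E3 →L[ℝ] G) :=
  (fderiv ℝ k z).flip

lemma dker_contDiffOn (k : E3 → F →L[ℝ] G) (hk : ContDiffOn ℝ (⊤ : ℕ∞) k {0}ᶜ) :
    ContDiffOn ℝ (⊤ : ℕ∞) (dker k) {0}ᶜ := by
  have h1 : ContDiffOn ℝ (⊤ : ℕ∞) (fderiv ℝ k) {0}ᶜ :=
    hk.fderiv_of_isOpen isOpen_compl_singleton (by simp)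
  have h2 : IsBoundedLinearMap ℝ (fun L : E3 →L[ℝ] F →L[ℝ] G => L.flip) :=
    ⟨⟨fun x y => rfl, fun c x => rfl⟩, 1, one_pos, fun x => by simp⟩
  exact h2.contDiff.comp_contDiffOn h1

lemma kernel_hasFDerivAt {μ : Measure E3} {S : Set E3}
    (hScl : IsClosed S) (hSc : IsCompact S) (hS : μ Sᶜ = 0) (k : E3 → F →L[ℝ] G)
    (hk : ContDiffOn ℝ (⊤ : ℕ∞) k {0}ᶜ)
    (g : E3 → F) (hg : Integrable g μ)
    (x : E3) (hx : x ∉ S) :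
    HasFDerivAt (fun x => ∫ y, k (x - y) (g y) ∂μ) (∫ y, dker k (x - y) (g y) ∂μ) x := by
  have hd := (dker_contDiffOn k hk).continuousOn
  obtain ⟨s, hs, hsS, C, hC⟩ := kernel_bound hScl hSc (dker k) hd x hx
  refine hasFDerivAt_integral_of_dominated_of_fderiv_le
    (F' := fun x y => dker k (x - y) (g y)) (bound := fun y => C * ‖g y‖) hs ?_
    (kernel_integrable hScl hSc hS k hk.continuousOn g hg x hx)
    (kernel_apply_aesm hScl hS _ hd g hg x hx) ?_ (hg.norm.const_mul C) ?_
  · filter_upwards [hs] with z hz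
    exact kernel_apply_aesm hScl hS k hk.continuousOn g hg z (hsS hz)
  · filter_upwards [ae_mem_of_full hS] with y hy z hz
    exact (dker k (z - y)).le_of_opNorm_le (hC z hz y hy) _
  · filter_upwards [ae_mem_of_full hS] with y hy z hz
    have hz0 := sub_mem_compl_zero (hsS hz) hy
    have h1 : HasFDerivAt k (fderiv ℝ k (z - y)) (z - y) :=
      ((hk.contDiffAt (isOpen_compl_singleton.mem_nhds hz0)).differentiableAt
        (by simp)).hasFDerivAt
    have h2 : HasFDerivAt (fun z => k (z - y)) (fderiv ℝ k (z - y)) z :=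
      (hasFDerivAt_comp_sub y).2 h1
    have h3 := h2.clm_apply (hasFDerivAt_const (g y) z)
    convert h3 using 1
    ext v
    simp [dker]

lemma kernel_contDiffOn_nat {F : Type} [NormedAddCommGroup F] [NormedSpace ℝ F]
    {μ : Measure E3} {S : Set E3}
    (hScl : IsClosed S) (hSc : IsCompact S) (hS : μ Sᶜ = 0)
    (g : E3 → F) (hg : Integrable g μ) (n : ℕ) :
    ∀ (G : Type) [NormedAddCommGroup G] [NormedSpace ℝ G] (k : E3 → F →L[ℝ] G)
    (_ : ContDiffOn ℝ (⊤ : ℕ∞) k {0}ᶜ),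
    ContDiffOn ℝ n (fun x => ∫ y, k (x - y) (g y) ∂μ) Sᶜ := by
  induction n with
  | zero =>
    intro G _ _ k hk
    simp only [Nat.cast_zero, contDiffOn_zero]
    intro x hx
    exact (kernel_hasFDerivAt hScl hSc hS k hk g hg x hx).continuousAt.continuousWithinAt
  | succ n ih =>
    intro G _ _ k hk
    push_cast
    rw [contDiffOn_succ_iff_fderiv_of_isOpen hScl.isOpen_compl]
    refine ⟨fun x hx => (kernel_hasFDerivAt hScl hSc hS k hk g hg x
      hx).differentiableAt.differentiableWithinAt, by simp, ?_⟩
    refine (ih _ (dker k) (dker_contDiffOn k hk)).congr fun x hx => ?_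
    exact (kernel_hasFDerivAt hScl hSc hS k hk g hg x hx).fderiv

end GenericKernel

/-- matrix as a real continuous linear map -/
noncomputable def mclm (M : Matrix (Fin 4) (Fin 4) ℂ) : (Fin 4 → ℂ) →L[ℝ] (Fin 4 → ℂ) :=
  LinearMap.toContinuousLinearMap (M.mulVecLin.restrictScalars ℝ)

@[simp] lemma mclm_apply (M : Matrix (Fin 4) (Fin 4) ℂ) (v : Fin 4 → ℂ) :
    mclm M v = M.mulVec v := rfl

/-- radial factor in front of beta, as a function of the norm -/
noncomputable def rA (m r : ℝ) : ℝ := m * (Real.exp (-(m * r)) / (4 * Real.pi * r))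
/-- radial factor in front of alpha -/
noncomputable def rB (m r : ℝ) : ℝ :=
  Real.exp (-(m * r)) / (4 * Real.pi * r) * ((1 + m * r) / r ^ 2)

/-- the kernel as a map to operators -/
noncomputable def ker (m : ℝ) (z : E3) : (Fin 4 → ℂ) →L[ℝ] (Fin 4 → ℂ) :=
  rA m ‖z‖ • mclm diracBeta +
    ∑ j : Fin 3, (rB m ‖z‖ * z j) • mclm (Complex.I • diracAlpha j)

lemma ker_apply (m : ℝ) (z : E3) (v : Fin 4 → ℂ) :
    ker m z v = (phiFund m z).mulVec v := by
  simp only [ker, phiFund, alphaDot, rA, rB, ContinuousLinearMap.add_apply,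
    ContinuousLinearMap.smul_apply, mclm_apply, ContinuousLinearMap.sum_apply,
    Matrix.smul_mulVec, Matrix.add_mulVec, Matrix.sum_mulVec, smul_add, Finset.smul_sum,
    ]
  congr 1
  · ext i
    simp; ring
  · refine Finset.sum_congr rfl fun j _ => ?_
    ext i
    simp; ring

lemma ker_contDiffOn (m : ℝ) : ContDiffOn ℝ (⊤ : ℕ∞) (ker m) {0}ᶜ := by
  intro z hz
  have hz0 : ‖z‖ ≠ 0 := norm_ne_zero_iff.2 hz
  have hn : ContDiffAt ℝ (⊤ : ℕ∞) (fun z : E3 => ‖z‖) z := contDiffAt_norm ℝ hz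
  have hp : 4 * Real.pi * ‖z‖ ≠ 0 := by positivity
  have he : ContDiffAt ℝ (⊤ : ℕ∞)
      (fun z : E3 => Real.exp (-(m * ‖z‖)) / (4 * Real.pi * ‖z‖)) z :=
    ((contDiffAt_const.mul hn).neg.exp).div (contDiffAt_const.mul hn) hp
  have ha : ContDiffAt ℝ (⊤ : ℕ∞) (fun z : E3 => rA m ‖z‖) z := contDiffAt_const.mul he
  have hb : ContDiffAt ℝ (⊤ : ℕ∞) (fun z : E3 => rB m ‖z‖) z :=
    he.mul ((contDiffAt_const.add (contDiffAt_const.mul hn)).div (hn.pow 2) (pow_ne_zero 2 hz0))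
  refine ContDiffAt.contDiffWithinAt ?_
  refine (ha.smul contDiffAt_const).add (ContDiffAt.sum fun j _ => ?_)
  refine (hb.mul ?_).smul contDiffAt_const
  exact (EuclideanSpace.proj j : E3 →L[ℝ] ℝ).contDiff.contDiffAt

/-- radial derivative factor of rB -/
noncomputable def rC (m r : ℝ) : ℝ := - (m * rA m r + 3 * rB m r) / r ^ 2

lemma hasFDerivAt_norm' (z : E3) (hz : z ≠ 0) :
    HasFDerivAt (fun z : E3 => ‖z‖) (‖z‖⁻¹ • innerSL ℝ z) z := by
  have hz0 : ‖z‖ ≠ 0 := norm_ne_zero_iff.2 hz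
  have h := (hasStrictFDerivAt_norm_sq z).hasFDerivAt.sqrt (pow_ne_zero 2 hz0)
  simp only [Real.sqrt_sq (norm_nonneg _)] at h
  refine h.congr_fderiv ?_
  ext v
  simp
  field_simp

lemma rA_hasDerivAt (m r : ℝ) (hr : r ≠ 0) : HasDerivAt (rA m) (-(m * rB m r * r)) r := by
  have he : HasDerivAt (fun r => Real.exp (-(m * r))) (Real.exp (-(m * r)) * (-(m * 1))) r :=
    (((hasDerivAt_id r).const_mul m).neg).exp
  have hp : 4 * Real.pi * r ≠ 0 := by positivity
  have h := (he.div ((hasDerivAt_id r).const_mul (4 * Real.pi)) hp).const_mul m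
  refine h.congr_deriv ?_
  simp only [rB, id]
  field_simp
  ring

lemma rB_hasDerivAt (m r : ℝ) (hr : r ≠ 0) : HasDerivAt (rB m) (rC m r * r) r := by
  have he : HasDerivAt (fun r => Real.exp (-(m * r))) (Real.exp (-(m * r)) * (-(m * 1))) r :=
    (((hasDerivAt_id r).const_mul m).neg).exp
  have hp : 4 * Real.pi * r ≠ 0 := by positivity
  have h := (he.div ((hasDerivAt_id r).const_mul (4 * Real.pi)) hp).mul
    ((((hasDerivAt_id r).const_mul m).const_add 1).div (hasDerivAt_pow 2 r) (pow_ne_zero 2 hr))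
  refine h.congr_deriv ?_
  simp only [rC, rA, rB, id, Pi.div_apply]
  field_simp
  ring

lemma ker_fderiv (m : ℝ) (z : E3) (hz : z ≠ 0) (i : Fin 3) :
    fderiv ℝ (ker m) z (EuclideanSpace.single i 1) =
      (-(m * rB m ‖z‖ * z i)) • mclm diracBeta +
      ∑ j : Fin 3, (rC m ‖z‖ * z i * z j + rB m ‖z‖ * (if j = i then 1 else 0)) •
        mclm (Complex.I • diracAlpha j) := by
  have hz0 : ‖z‖ ≠ 0 := norm_ne_zero_iff.2 hz
  have hn := hasFDerivAt_norm' z hz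
  have ha : HasFDerivAt (fun z : E3 => rA m ‖z‖) _ z :=
    (rA_hasDerivAt m ‖z‖ hz0).comp_hasFDerivAt z hn
  have hb : HasFDerivAt (fun z : E3 => rB m ‖z‖) _ z :=
    (rB_hasDerivAt m ‖z‖ hz0).comp_hasFDerivAt z hn
  have hj : ∀ j : Fin 3, HasFDerivAt (fun z : E3 => z j)
      (EuclideanSpace.proj j : E3 →L[ℝ] ℝ) z := fun j =>
    (EuclideanSpace.proj j : E3 →L[ℝ] ℝ).hasFDerivAt
  have h : HasFDerivAt (ker m) _ z := (ha.smul_const (mclm diracBeta)).add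
    (HasFDerivAt.fun_sum (u := Finset.univ) fun j _ =>
      ((hb.mul (hj j)).smul_const (mclm (Complex.I • diracAlpha j))))
  rw [h.fderiv]
  simp only [ContinuousLinearMap.add_apply, ContinuousLinearMap.sum_apply,
    ContinuousLinearMap.smulRight_apply, ContinuousLinearMap.smul_apply, innerSL_apply_apply,
    PiLp.proj_apply, EuclideanSpace.inner_single_right, smul_eq_mul]
  congr 1
  · congr 1
    simp; field_simp
  · refine Finset.sum_congr rfl fun j _ => ?_
    congr 1
    simp [Pi.single_apply]
    field_simp
    ring

lemma ker_dirac (m : ℝ) (z : E3) (hz : z ≠ 0) (v : Fin 4 → ℂ) :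
    (-Complex.I) • (∑ j : Fin 3, (diracAlpha j).mulVec
      (fderiv ℝ (ker m) z (EuclideanSpace.single j 1) v)) +
      (m : ℂ) • diracBeta.mulVec (ker m z v) = 0 := by
  have hz0 : ‖z‖ ≠ 0 := norm_ne_zero_iff.2 hz
  have hns : ‖z‖ ^ 2 = z 0 ^ 2 + z 1 ^ 2 + z 2 ^ 2 := by
    rw [EuclideanSpace.norm_sq_eq]; simp [Fin.sum_univ_three]
  have hC : m * rA m ‖z‖ + 3 * rB m ‖z‖ + rC m ‖z‖ * (z 0 ^ 2 + z 1 ^ 2 + z 2 ^ 2) = 0 := by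
    rw [← hns, rC]; field_simp; ring
  have hC' : (m : ℂ) * rA m ‖z‖ + 3 * rB m ‖z‖ +
      rC m ‖z‖ * ((z 0 : ℂ) ^ 2 + (z 1 : ℂ) ^ 2 + (z 2 : ℂ) ^ 2) = 0 := by exact_mod_cast hC
  simp only [ker_fderiv m z hz, ker]
  generalize rA m ‖z‖ = a at *
  generalize rB m ‖z‖ = b at *
  generalize rC m ‖z‖ = c at *
  have hI := Complex.I_sq
  clear hC hns hz0 hz
  ext i
  fin_cases i <;>
  simp [Fin.sum_univ_three, diracAlpha, diracBeta, Matrix.mulVec, dotProduct,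
    Fin.sum_univ_four]
  all_goals grind

/-- Let `m > 0`, let `μ` be a finite Borel measure on `ℝ³` whose topological support `S` is
compact, and let `g` be `μ`-integrable.  Then on the open set `ℝ³ ∖ S` the integral defining
`Φg` converges absolutely, `Φg` is smooth there, and `-i Σ_j α_j ∂_j(Φg) + m β Φg = 0` on
`ℝ³ ∖ S`. -/
theorem singleLayer_smooth_and_dirac_harmonic (m : ℝ) (hm : 0 < m)
    (μ : Measure (EuclideanSpace ℝ (Fin 3))) [IsFiniteMeasure μ]
    (S : Set (EuclideanSpace ℝ (Fin 3))) (hSclosed : IsClosed S) (hScompact : IsCompact S)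
    (hSfull : μ Sᶜ = 0)
    (g : EuclideanSpace ℝ (Fin 3) → Fin 4 → ℂ) (hg : Integrable g μ) :
    (∀ x ∉ S, Integrable (fun y => (phiFund m (x - y)).mulVec (g y)) μ) ∧
    ContDiffOn ℝ (⊤ : ℕ∞) (singleLayer m μ g) Sᶜ ∧
    (∀ x ∉ S,
      (-Complex.I) • (∑ j : Fin 3, (diracAlpha j).mulVec
          (fderiv ℝ (singleLayer m μ g) x (EuclideanSpace.single j 1))) +
        (m : ℂ) • diracBeta.mulVec (singleLayer m μ g x) = 0) := by
  have hk := ker_contDiffOn m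
  have hsl : singleLayer m μ g = fun x => ∫ y, ker m (x - y) (g y) ∂μ := by
    funext x
    simp only [singleLayer, ker_apply]
  refine ⟨fun x hx => ?_, ?_, fun x hx => ?_⟩
  · simpa only [ker_apply] using
      kernel_integrable hSclosed hScompact hSfull (ker m) hk.continuousOn g hg x hx
  · rw [hsl, contDiffOn_infty]
    exact fun n => kernel_contDiffOn_nat hSclosed hScompact hSfull g hg n _ _ hk
  · have hi := kernel_integrable hSclosed hScompact hSfull (ker m) hk.continuousOn g hg x hx
    have hi' := kernel_integrable hSclosed hScompact hSfull (dker (ker m))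
      (dker_contDiffOn _ hk).continuousOn g hg x hx
    rw [hsl, (kernel_hasFDerivAt hSclosed hScompact hSfull (ker m) hk g hg x hx).fderiv]
    let P : (E3 →L[ℝ] (Fin 4 → ℂ)) →L[ℝ] (Fin 4 → ℂ) :=
      ∑ j : Fin 3, (mclm ((-Complex.I) • diracAlpha j)).comp
        (ContinuousLinearMap.apply ℝ (Fin 4 → ℂ) (EuclideanSpace.single j (1 : ℝ) : E3))
    let Q : (Fin 4 → ℂ) →L[ℝ] (Fin 4 → ℂ) := mclm ((m : ℂ) • diracBeta)
    have hP : ∀ L, P L = (-Complex.I) • (∑ j : Fin 3, (diracAlpha j).mulVec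
          (L (EuclideanSpace.single j 1))) := by
      intro L
      simp only [P, ContinuousLinearMap.sum_apply, ContinuousLinearMap.comp_apply, mclm_apply,
        ContinuousLinearMap.apply_apply, Matrix.smul_mulVec, Finset.smul_sum]
    have hQ : ∀ w, Q w = (m : ℂ) • diracBeta.mulVec w := by
      intro w
      simp only [Q, mclm_apply, Matrix.smul_mulVec]
    rw [← hP, ← hQ, ← P.integral_comp_comm hi', ← Q.integral_comp_comm hi,
      ← integral_add (P.integrable_comp hi') (Q.integrable_comp hi)]
    refine integral_eq_zero_of_ae ?_
    filter_upwards [ae_mem_of_full hSfull] with y hy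
    have := ker_dirac m (x - y) (sub_mem_compl_zero hx hy) (g y)
    rw [hP, hQ]
    simpa [dker] using this
end
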